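/- Let s ≥ 0. There exists a constant C > 0 such that for all smooth ℤ²-periodic functions f, g : ℝ² → ℂ, one has ‖fg‖_{H^s} ≤ C( ‖f‖_{L^∞} ‖g‖_{H^s} + ‖g‖_{L^∞} ‖f‖_{H^s} ), where ‖f‖_{L^∞} = sup_{x∈ℝ²} |f(x)|. -/

import Mathlib

open MeasureTheory Real ENNReal

/-- The `k`-th Fourier coefficient of a `ℤ²`-periodic function `f : ℝ² → ℂ`. -/
noncomputable def fourierCoef (f : (Fin 2 → ℝ) → ℂ) (k : Fin 2 → ℤ) : ℂ :=
  ∫ x in Set.Icc (0 : Fin 2 → ℝ) 1,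
    f x * Complex.exp (-(2 * Real.pi * Complex.I) * ((∑ i, (k i : ℝ) * x i : ℝ) : ℂ))

/-- The `H^s` norm of a `ℤ²`-periodic function, defined via Fourier coefficients,
valued in `[0,∞]`. -/
noncomputable def sobolevNorm (s : ℝ) (f : (Fin 2 → ℝ) → ℂ) : ℝ≥0∞ :=
  (∑' k : Fin 2 → ℤ,
    ENNReal.ofReal ((1 + ∑ i, ((k i : ℝ)) ^ 2) ^ s * ‖fourierCoef f k‖ ^ 2)) ^ (1/2 : ℝ)

section Aux

attribute [local instance] instMeasureSpaceUnitAddCircle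
attribute [local instance] instIsProbabilityMeasureUnitAddCircleVolume

open UnitAddTorus ComplexConjugate

/-- The two-dimensional torus. -/
abbrev KPT := UnitAddTorus (Fin 2)

/-- Fourier coefficient as a linear map. -/
noncomputable def kpC (k : Fin 2 → ℤ) : C(KPT, ℂ) →ₗ[ℂ] ℂ where
  toFun F := inner ℂ (mFourierLp 2 k) (ContinuousMap.toLp (E := ℂ) 2 volume ℂ F)
  map_add' F G := by rw [map_add, inner_add_right]
  map_smul' c F := by rw [map_smul, inner_smul_right]; rfl

lemma kpC_eq (k : Fin 2 → ℤ) (F : C(KPT, ℂ)) : kpC k F = mFourierCoeff F k := by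
  rw [← mFourierCoeff_toLp, ← mFourierBasis_repr, HilbertBasis.repr_apply_apply, coe_mFourierBasis]
  rfl

lemma kpC_mFourier (k j : Fin 2 → ℤ) : kpC k (mFourier j) = if k = j then 1 else 0 :=
  (orthonormal_iff_ite.mp (orthonormal_mFourier (d := Fin 2))) k j

lemma kp_integrable (F : C(KPT, ℂ)) : Integrable (fun t => F t) (volume : Measure KPT) :=
  F.continuous.integrable_of_hasCompactSupport (HasCompactSupport.of_compactSpace _)

lemma kp_integrable_real {F : KPT → ℝ} (hF : Continuous F) :
    Integrable F (volume : Measure KPT) :=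
  hF.integrable_of_hasCompactSupport (HasCompactSupport.of_compactSpace _)

lemma kp_parseval (F : C(KPT, ℂ)) : HasSum (fun k => ‖kpC k F‖ ^ 2) (∫ t, ‖F t‖ ^ 2) := by
  have h := hasSum_sq_mFourierCoeff (ContinuousMap.toLp (E := ℂ) 2 volume ℂ F)
  simp only [mFourierCoeff_toLp, ← kpC_eq] at h
  convert h using 1
  apply integral_congr_ae
  filter_upwards [ContinuousMap.coeFn_toLp (p := 2) (𝕜 := ℂ) volume F] with t ht
  rw [ht]

lemma kp_norm_mFourier (k : Fin 2 → ℤ) (x : KPT) : ‖mFourier k x‖ = 1 := by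
  simp only [mFourier, fourier_apply, ContinuousMap.coe_mk, norm_prod, Circle.norm_coe,
    Finset.prod_const_one]

/-- Integral of square of a Dirichlet kernel. -/
lemma kp_dirichlet (S : Finset (Fin 2 → ℤ)) (x : KPT) :
    ∫ t, ‖(∑ a ∈ S, conj (mFourier a x) • mFourier a : C(KPT, ℂ)) t‖ ^ 2 = S.card := by
  have h := kp_parseval (∑ a ∈ S, conj (mFourier a x) • mFourier a)
  have h2 : (fun k => ‖kpC k (∑ a ∈ S, conj (mFourier a x) • mFourier a)‖ ^ 2)
      = fun k => if k ∈ S then (1 : ℝ) else 0 := by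
    funext k
    simp only [map_sum, map_smul, kpC_mFourier, smul_eq_mul, mul_ite, mul_one, mul_zero,
      Finset.sum_ite_eq]
    split_ifs with hk
    · simp [kp_norm_mFourier]
    · simp
  rw [h2] at h
  have h3 : HasSum (fun k => if k ∈ S then (1 : ℝ) else 0) (∑ k ∈ S, if k ∈ S then (1 : ℝ) else 0) :=
    hasSum_sum_of_ne_finset_zero (fun k hk => by simp [hk])
  rw [h.unique h3]
  simp

/-- small box -/
noncomputable def kpA (N : ℕ) : Finset (Fin 2 → ℤ) := Fintype.piFinset fun _ => Finset.Ico (0 : ℤ) N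
/-- big box -/
noncomputable def kpB (N : ℕ) : Finset (Fin 2 → ℤ) := Fintype.piFinset fun _ => Finset.Ico (-N : ℤ) (2 * N)

lemma kpA_card (N : ℕ) : (kpA N).card = N ^ 2 := by
  simp [kpA]

lemma kpB_card (N : ℕ) : (kpB N).card = (3 * N) ^ 2 := by
  simp only [kpB, Fintype.card_piFinset, Int.card_Ico, Finset.prod_const, Finset.card_univ,
    Fintype.card_fin]
  congr 1
  omega

/-- De la Vallée Poussin type operator. -/
noncomputable def kpV (N : ℕ) (F : C(KPT, ℂ)) : C(KPT, ℂ) :=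
  ((N : ℂ) ^ 2)⁻¹ • ∑ a ∈ kpA N, ∑ b ∈ kpB N, kpC (b - a) F • mFourier (b - a)

lemma kpV_bound (N : ℕ) (F : C(KPT, ℂ)) (M : ℝ) (hM : ∀ t, ‖F t‖ ≤ M) (x : KPT) :
    ‖kpV N F x‖ ≤ 3 * M := by
  have hM0 : 0 ≤ M := (norm_nonneg _).trans (hM 0)
  rcases Nat.eq_zero_or_pos N with rfl | hN
  · simp [kpV]; positivity
  set DA : C(KPT, ℂ) := ∑ a ∈ kpA N, conj (mFourier a x) • mFourier a with hDA
  set DB : C(KPT, ℂ) := ∑ a ∈ kpB N, conj (mFourier a x) • mFourier a with hDB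
  have key : (∑ a ∈ kpA N, ∑ b ∈ kpB N, kpC (b - a) F • mFourier (b - a) : C(KPT, ℂ)) x
      = ∫ t, F t * (DA t * conj (DB t)) := by
    have h1 : ∀ t, F t * (DA t * conj (DB t)) = ∑ a ∈ kpA N, ∑ b ∈ kpB N,
        (mFourier (-(b - a)) t • F t) * mFourier (b - a) x := by
      intro t
      simp only [hDA, hDB, ContinuousMap.sum_apply, ContinuousMap.smul_apply, map_sum]
      rw [Finset.sum_mul_sum, Finset.mul_sum]
      simp only [Finset.mul_sum]
      refine Finset.sum_congr rfl fun a _ => Finset.sum_congr rfl fun b _ => ?_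
      rw [neg_sub, sub_eq_add_neg, sub_eq_add_neg, mFourier_add, mFourier_add, mFourier_neg,
        mFourier_neg]
      simp only [smul_eq_mul, map_mul, Complex.conj_conj]
      ring
    have hint : ∀ a b : Fin 2 → ℤ, Integrable
        (fun t => (mFourier (-(b - a)) t • F t) * mFourier (b - a) x) (volume : Measure KPT) :=
      fun a b => (kp_integrable (mFourier (-(b - a)) * F)).mul_const _
    simp_rw [h1]
    rw [integral_finsetSum _ (fun a _ => integrable_finsetSum _ fun b _ => hint a b)]
    simp only [ContinuousMap.sum_apply]
    refine Finset.sum_congr rfl fun a _ => ?_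
    rw [integral_finsetSum _ (fun b _ => hint a b)]
    refine Finset.sum_congr rfl fun b _ => ?_
    rw [integral_mul_const, ContinuousMap.smul_apply, kpC_eq]
    rfl
  have hA := kp_dirichlet (kpA N) x
  have hB := kp_dirichlet (kpB N) x
  rw [← hDA, kpA_card] at hA
  rw [← hDB, kpB_card] at hB
  have hb : ‖∫ t, F t * (DA t * conj (DB t))‖ ≤ ∫ t, M * (3 / 2 * ‖DA t‖ ^ 2 + 1 / 6 * ‖DB t‖ ^ 2) := by
    refine norm_integral_le_of_norm_le (kp_integrable_real (by fun_prop)) (.of_forall fun t => ?_)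
    rw [norm_mul, norm_mul, RCLike.norm_conj]
    refine mul_le_mul (hM t) ?_ (by positivity) hM0
    nlinarith [sq_nonneg (3 * ‖DA t‖ - ‖DB t‖)]
  rw [integral_const_mul, integral_add (kp_integrable_real (by fun_prop))
    (kp_integrable_real (by fun_prop)), integral_const_mul, integral_const_mul, hA, hB] at hb
  rw [kpV, ContinuousMap.smul_apply, key, norm_smul, norm_inv, norm_pow, Complex.norm_natCast]
  have hN' : (0 : ℝ) < (N : ℝ) ^ 2 := by positivity
  rw [inv_mul_le_iff₀ hN']
  refine hb.trans (le_of_eq ?_)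
  push_cast
  ring

/-- sup norm of a frequency -/
def kpN (k : Fin 2 → ℤ) : ℕ := max (k 0).natAbs (k 1).natAbs

lemma kpV_coeff (N : ℕ) (F : C(KPT, ℂ)) (k : Fin 2 → ℤ) :
    kpC k (kpV N F) = ((N : ℂ) ^ 2)⁻¹ * (((kpA N).filter fun a => a + k ∈ kpB N).card : ℂ) * kpC k F := by
  have : ∀ a b : Fin 2 → ℤ, (kpC (b - a) F * if k = b - a then (1 : ℂ) else 0)
      = if a + k = b then kpC k F else 0 := by
    intro a b
    by_cases h : a + k = b
    · subst h; simp
    · have : ¬ k = b - a := fun h' => h (by rw [h']; abel)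
      simp [h, this]
  simp only [kpV, map_smul, map_sum, kpC_mFourier, smul_eq_mul, this, Finset.sum_ite_eq]
  rw [← Finset.sum_filter, Finset.sum_const, nsmul_eq_mul, mul_assoc]

lemma kpV_tail (N : ℕ) (F : C(KPT, ℂ)) (k : Fin 2 → ℤ) :
    ‖kpC k (F - kpV N F)‖ ^ 2 ≤ if N ≤ kpN k then ‖kpC k F‖ ^ 2 else 0 := by
  rcases Nat.eq_zero_or_pos N with rfl | hN
  · simp [kpV]
  set c := ((kpA N).filter fun a => a + k ∈ kpB N).card with hc
  have hcle : c ≤ N ^ 2 := by rw [← kpA_card]; exact Finset.card_filter_le _ _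
  have hN' : (0 : ℝ) < (N : ℝ) ^ 2 := by positivity
  have e : kpC k (F - kpV N F) = ((1 - ((N : ℝ) ^ 2)⁻¹ * (c : ℝ) : ℝ) : ℂ) * kpC k F := by
    rw [map_sub, kpV_coeff, ← hc]; push_cast; ring
  rw [e, norm_mul, Complex.norm_real]
  split_ifs with h
  · have h1 : ((N : ℝ) ^ 2)⁻¹ * (c : ℝ) ≤ 1 := by
      rw [inv_mul_le_iff₀ hN']; rw [mul_one]; exact_mod_cast hcle
    have h0 : 0 ≤ ((N : ℝ) ^ 2)⁻¹ * (c : ℝ) := by positivity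
    have : ‖1 - ((N : ℝ) ^ 2)⁻¹ * (c : ℝ)‖ ≤ 1 := by
      rw [Real.norm_eq_abs, abs_le]; constructor <;> linarith
    gcongr
    exact mul_le_of_le_one_left (norm_nonneg _) this
  · have : c = N ^ 2 := by
      rw [hc, ← kpA_card]
      congr 1
      apply Finset.filter_true_of_mem
      intro a ha
      simp only [kpA, kpB, Fintype.mem_piFinset, Finset.mem_Ico, Fin.forall_fin_two, kpN,
        Pi.add_apply] at *
      omega
    rw [this]
    push_cast
    rw [inv_mul_cancel₀ hN'.ne']
    simp

lemma kpV_prod (N : ℕ) (F G : C(KPT, ℂ)) (k : Fin 2 → ℤ) (hk : 4 * N ≤ kpN k) :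
    kpC k (kpV N F * kpV N G) = 0 := by
  have hmul : ∀ m n : Fin 2 → ℤ, (mFourier m * mFourier n : C(KPT, ℂ)) = mFourier (m + n) := by
    intro m n; ext t; rw [mFourier_add]; rfl
  simp only [kpV, smul_mul_smul_comm, Finset.sum_mul_sum, hmul, map_smul, map_sum, kpC_mFourier]
  rw [Finset.sum_eq_zero, smul_zero]
  intro a ha
  refine Finset.sum_eq_zero fun a' ha' => Finset.sum_eq_zero fun b hb => 
    Finset.sum_eq_zero fun b' hb' => ?_
  rw [if_neg, smul_zero]
  rintro rfl
  simp only [kpA, kpB, Fintype.mem_piFinset, Finset.mem_Ico, Fin.forall_fin_two, kpN,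
        Pi.add_apply, Pi.sub_apply] at *
  omega

/-- Main tail estimate. -/
lemma kp_main (N : ℕ) (F G : C(KPT, ℂ)) (P Q : ℝ) (hP : ∀ t, ‖F t‖ ≤ P) (hQ : ∀ t, ‖G t‖ ≤ Q) :
    ∑' k, (if 4 * N ≤ kpN k then ENNReal.ofReal (‖kpC k (F * G)‖ ^ 2) else 0) ≤
      18 * (ENNReal.ofReal Q ^ 2 * ∑' k, (if N ≤ kpN k then ENNReal.ofReal (‖kpC k F‖ ^ 2) else 0) +
      ENNReal.ofReal P ^ 2 * ∑' k, (if N ≤ kpN k then ENNReal.ofReal (‖kpC k G‖ ^ 2) else 0)) := by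
  have hP0 : 0 ≤ P := (norm_nonneg _).trans (hP 0)
  have hQ0 : 0 ≤ Q := (norm_nonneg _).trans (hQ 0)
  have pars : ∀ H : C(KPT, ℂ), ENNReal.ofReal (∫ t, ‖H t‖ ^ 2) =
      ∑' k, ENNReal.ofReal (‖kpC k H‖ ^ 2) := by
    intro H
    rw [← (kp_parseval H).tsum_eq, ENNReal.ofReal_tsum_of_nonneg (fun _ => by positivity)
      (kp_parseval H).summable]
  have tail : ∀ H : C(KPT, ℂ), ENNReal.ofReal (∫ t, ‖(H - kpV N H) t‖ ^ 2) ≤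
      ∑' k, (if N ≤ kpN k then ENNReal.ofReal (‖kpC k H‖ ^ 2) else 0) := by
    intro H
    rw [pars]
    refine ENNReal.tsum_le_tsum fun k => ?_
    refine (ENNReal.ofReal_le_ofReal (kpV_tail N H k)).trans ?_
    split_ifs <;> simp
  have step1 : ∑' k, (if 4 * N ≤ kpN k then ENNReal.ofReal (‖kpC k (F * G)‖ ^ 2) else 0) ≤
      ENNReal.ofReal (∫ t, ‖(F * G - kpV N F * kpV N G) t‖ ^ 2) := by
    rw [pars]
    refine ENNReal.tsum_le_tsum fun k => ?_
    split_ifs with h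
    · rw [map_sub, kpV_prod N F G k h, sub_zero]
    · exact zero_le
  have step2 : ∫ t, ‖(F * G - kpV N F * kpV N G) t‖ ^ 2 ≤
      18 * (Q ^ 2 * ∫ t, ‖(F - kpV N F) t‖ ^ 2) + 18 * (P ^ 2 * ∫ t, ‖(G - kpV N G) t‖ ^ 2) := by
    rw [← integral_const_mul, ← integral_const_mul, ← integral_const_mul, ← integral_const_mul,
      ← integral_add (kp_integrable_real (by fun_prop)) (kp_integrable_real (by fun_prop))]
    refine integral_mono (kp_integrable_real (by fun_prop)) (kp_integrable_real (by fun_prop)) ?_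
    intro t
    have e : (F * G - kpV N F * kpV N G) t =
        G t * (F - kpV N F) t + kpV N F t * (G - kpV N G) t := by
      simp only [ContinuousMap.sub_apply, ContinuousMap.mul_apply]; ring
    have hb : ‖(F * G - kpV N F * kpV N G) t‖ ≤
        Q * ‖(F - kpV N F) t‖ + 3 * P * ‖(G - kpV N G) t‖ := by
      rw [e]
      refine (norm_add_le _ _).trans ?_
      rw [norm_mul, norm_mul]
      gcongr
      · exact hQ t
      · exact kpV_bound N F P hP t
    have hb2 := pow_le_pow_left₀ (norm_nonneg _) hb 2
    dsimp only
    nlinarith [sq_nonneg (Q * ‖(F - kpV N F) t‖ - 3 * P * ‖(G - kpV N G) t‖),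
      sq_nonneg (Q * ‖(F - kpV N F) t‖)]
  refine step1.trans ((ENNReal.ofReal_le_ofReal step2).trans ?_)
  have i0 : ∀ H : C(KPT, ℂ), 0 ≤ ∫ t, ‖H t‖ ^ 2 := fun H => integral_nonneg fun t => by positivity
  have := i0 (F - kpV N F)
  have := i0 (G - kpV N G)
  rw [ENNReal.ofReal_add (by positivity) (by positivity), ENNReal.ofReal_mul (p := 18) (by norm_num),
    ENNReal.ofReal_mul (p := 18) (by norm_num), ENNReal.ofReal_mul (sq_nonneg Q),
    ENNReal.ofReal_mul (sq_nonneg P), ← mul_add, ENNReal.ofReal_pow hP0, ENNReal.ofReal_pow hQ0,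
    ENNReal.ofReal_ofNat]
  gcongr
  · exact tail F
  · exact tail G

/-- radial weight -/
noncomputable def kpW (s : ℝ) (n : ℕ) : ℝ≥0∞ := ENNReal.ofReal ((1 + (n : ℝ) ^ 2) ^ s)

/-- increments of the weight -/
noncomputable def kpa (s : ℝ) : ℕ → ℝ≥0∞
  | 0 => kpW s 0
  | n + 1 => kpW s (n + 1) - kpW s n

lemma kpW_mono {s : ℝ} (hs : 0 ≤ s) (n : ℕ) : kpW s n ≤ kpW s (n + 1) := by
  unfold kpW
  gcongr
  simp

lemma kpa_sum {s : ℝ} (hs : 0 ≤ s) (n : ℕ) :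
    ∑' N, (if N ≤ n then kpa s N else 0) = kpW s n := by
  rw [tsum_eq_sum (s := Finset.range (n + 1)) (fun b hb => if_neg (by simpa using hb))]
  rw [Finset.sum_congr rfl (g := kpa s) (fun b hb => if_pos (by simpa [Nat.lt_succ_iff] using hb))]
  induction n with
  | zero => simp [kpa]
  | succ n ih => 
    rw [Finset.sum_range_succ, ih, kpa, add_tsub_cancel_of_le (kpW_mono hs n)]

lemma kp_abel {s : ℝ} (hs : 0 ≤ s) (m : (Fin 2 → ℤ) → ℕ) (u : (Fin 2 → ℤ) → ℝ≥0∞) :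
    ∑' k, kpW s (m k) * u k = ∑' N, kpa s N * ∑' k, (if N ≤ m k then u k else 0) := by
  simp_rw [← kpa_sum hs, ← ENNReal.tsum_mul_right, ← ENNReal.tsum_mul_left]
  rw [ENNReal.tsum_comm]
  refine tsum_congr fun N => tsum_congr fun k => ?_
  split_ifs <;> simp

/-- squared Sobolev norm on the torus -/
noncomputable def kpS (s : ℝ) (F : C(KPT, ℂ)) : ℝ≥0∞ :=
  ∑' k : Fin 2 → ℤ, ENNReal.ofReal ((1 + ∑ i, ((k i : ℝ)) ^ 2) ^ s * ‖kpC k F‖ ^ 2)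

lemma kpN_sq_le (k : Fin 2 → ℤ) : (kpN k : ℝ) ^ 2 ≤ ∑ i, ((k i : ℝ)) ^ 2 := by
  have h : (kpN k : ℤ) ^ 2 ≤ (k 0) ^ 2 + (k 1) ^ 2 := by
    rw [← Int.natAbs_sq (k 0), ← Int.natAbs_sq (k 1)]
    unfold kpN
    rcases le_total (k 0).natAbs (k 1).natAbs with h | h
    · rw [max_eq_right h]; nlinarith [sq_nonneg ((k 0).natAbs : ℤ)]
    · rw [max_eq_left h]; nlinarith [sq_nonneg ((k 1).natAbs : ℤ)]
  rw [Fin.sum_univ_two]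
  exact_mod_cast h

lemma kpN_quarter (k : Fin 2 → ℤ) :
    1 + ∑ i, ((k i : ℝ)) ^ 2 ≤ 56 * (1 + ((kpN k / 4 : ℕ) : ℝ) ^ 2) := by
  have h : 1 + ((k 0) ^ 2 + (k 1) ^ 2) ≤ 56 * (1 + ((kpN k / 4 : ℕ) : ℤ) ^ 2) := by
    rw [← Int.natAbs_sq (k 0), ← Int.natAbs_sq (k 1)]
    have h0 : (k 0).natAbs ≤ kpN k := le_max_left _ _
    have h1 : (k 1).natAbs ≤ kpN k := le_max_right _ _
    have h2 : kpN k ≤ 4 * (kpN k / 4) + 3 := by omega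
    generalize kpN k / 4 = m at *
    have h3 : ((k 0).natAbs : ℤ) ≤ 4 * m + 3 := by omega
    have h4 : ((k 1).natAbs : ℤ) ≤ 4 * m + 3 := by omega
    have h5 := pow_le_pow_left₀ (by positivity) h3 2
    have h6 := pow_le_pow_left₀ (by positivity) h4 2
    nlinarith [sq_nonneg ((m : ℤ) - 1)]
  rw [Fin.sum_univ_two]
  have h' : ((1 + ((k 0) ^ 2 + (k 1) ^ 2) : ℤ) : ℝ) ≤ ((56 * (1 + ((kpN k / 4 : ℕ) : ℤ) ^ 2) : ℤ) : ℝ) :=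
    Int.cast_le.2 h
  push_cast at h' ⊢
  exact h'

lemma kpS_lower {s : ℝ} (hs : 0 ≤ s) (F : C(KPT, ℂ)) :
    ∑' k, kpW s (kpN k) * ENNReal.ofReal (‖kpC k F‖ ^ 2) ≤ kpS s F := by
  refine ENNReal.tsum_le_tsum fun k => ?_
  rw [ENNReal.ofReal_mul (by positivity), kpW]
  gcongr
  exact kpN_sq_le k

lemma kpS_upper {s : ℝ} (hs : 0 ≤ s) (F : C(KPT, ℂ)) :
    kpS s F ≤ ENNReal.ofReal (56 ^ s) *
      ∑' k, kpW s (kpN k / 4) * ENNReal.ofReal (‖kpC k F‖ ^ 2) := by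
  rw [← ENNReal.tsum_mul_left]
  refine ENNReal.tsum_le_tsum fun k => ?_
  rw [ENNReal.ofReal_mul (by positivity), kpW, ← mul_assoc,
    ← ENNReal.ofReal_mul (p := 56 ^ s) (by positivity), ← Real.mul_rpow (by positivity) (by positivity)]
  gcongr
  exact kpN_quarter k

lemma kpS_mul {s : ℝ} (hs : 0 ≤ s) (F G : C(KPT, ℂ)) (P Q : ℝ)
    (hP : ∀ t, ‖F t‖ ≤ P) (hQ : ∀ t, ‖G t‖ ≤ Q) :
    kpS s (F * G) ≤ ENNReal.ofReal (56 ^ s) * (18 *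
      (ENNReal.ofReal Q ^ 2 * kpS s F + ENNReal.ofReal P ^ 2 * kpS s G)) := by
  refine (kpS_upper hs _).trans ?_
  gcongr
  rw [kp_abel hs]
  calc _ ≤ ∑' N, kpa s N * (18 * (ENNReal.ofReal Q ^ 2 *
          ∑' k, (if N ≤ kpN k then ENNReal.ofReal (‖kpC k F‖ ^ 2) else 0) +
          ENNReal.ofReal P ^ 2 *
          ∑' k, (if N ≤ kpN k then ENNReal.ofReal (‖kpC k G‖ ^ 2) else 0))) := by
        refine ENNReal.tsum_le_tsum fun N => ?_
        gcongr
        simp only [Nat.le_div_iff_mul_le (show 0 < 4 by norm_num), mul_comm N 4]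
        exact kp_main N F G P Q hP hQ
    _ = 18 * (ENNReal.ofReal Q ^ 2 * ∑' k, kpW s (kpN k) * ENNReal.ofReal (‖kpC k F‖ ^ 2) +
          ENNReal.ofReal P ^ 2 * ∑' k, kpW s (kpN k) * ENNReal.ofReal (‖kpC k G‖ ^ 2)) := by
        rw [kp_abel hs kpN, kp_abel hs kpN, ← ENNReal.tsum_mul_left, ← ENNReal.tsum_mul_left,
          ← ENNReal.tsum_add, ← ENNReal.tsum_mul_left]
        refine tsum_congr fun N => ?_
        ring
    _ ≤ _ := by
        gcongr
        · exact kpS_lower hs F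
        · exact kpS_lower hs G

lemma kp_lift (f : (Fin 2 → ℝ) → ℂ) (hf : Continuous f)
    (hp : ∀ (x : Fin 2 → ℝ) (m : Fin 2 → ℤ), f (x + fun i => (m i : ℝ)) = f x) :
    ∃ F : C(KPT, ℂ), ∀ x : Fin 2 → ℝ, F (fun i => (x i : UnitAddCircle)) = f x := by
  have hq : IsOpenQuotientMap (Pi.map (fun (_ : Fin 2) (y : ℝ) => (y : UnitAddCircle))) :=
    IsOpenQuotientMap.piMap fun _ => QuotientAddGroup.isOpenQuotientMap_mk
  have hr : ∀ t : UnitAddCircle, ∃ y : ℝ, (y : UnitAddCircle) = t := QuotientAddGroup.mk_surjective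
  choose r hr using hr
  have hF : ∀ x : Fin 2 → ℝ, f (fun i => r (x i : UnitAddCircle)) = f x := by
    intro x
    have : ∀ i, ∃ m : ℤ, r (x i : UnitAddCircle) = x i + m := by
      intro i
      have h := hr (x i : UnitAddCircle)
      rw [← sub_eq_zero, ← AddCircle.coe_sub, AddCircle.coe_eq_zero_iff] at h
      obtain ⟨m, hm⟩ := h
      refine ⟨m, ?_⟩
      simp only [zsmul_eq_mul, mul_one] at hm
      linarith
    choose m hm using this
    rw [← hp x m]
    congr 1
    funext i
    exact hm i
  refine ⟨⟨fun t => f (fun i => r (t i)), ?_⟩, hF⟩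
  rw [← hq.continuous_comp_iff]
  convert hf using 1
  funext x
  exact hF x

lemma kp_coef (f : (Fin 2 → ℝ) → ℂ) (F : C(KPT, ℂ))
    (h : ∀ x : Fin 2 → ℝ, F (fun i => (x i : UnitAddCircle)) = f x) (k : Fin 2 → ℤ) :
    fourierCoef f k = kpC k F := by
  rw [kpC_eq, mFourierCoeff_eq_integral F k 0, fourierCoef]
  have hset : ({x : Fin 2 → ℝ | ∀ i, x i ∈ Set.Ioc ((0 : Fin 2 → ℝ) i) ((0 : Fin 2 → ℝ) i + 1)})
      =ᵐ[volume] Set.Icc (0 : Fin 2 → ℝ) 1 := by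
    have := Measure.univ_pi_Ioc_ae_eq_Icc (μ := fun _ : Fin 2 => (volume : Measure ℝ))
      (f := 0) (g := 1)
    rw [← volume_pi] at this
    have e : {x : Fin 2 → ℝ | ∀ i, x i ∈ Set.Ioc ((0 : Fin 2 → ℝ) i) ((0 : Fin 2 → ℝ) i + 1)}
        = Set.univ.pi fun i => Set.Ioc ((0 : Fin 2 → ℝ) i) ((1 : Fin 2 → ℝ) i) := by
      ext x
      simp
    rw [e]
    exact this
  rw [setIntegral_congr_set hset]
  refine integral_congr_ae (.of_forall fun x => ?_)
  simp only [h, smul_eq_mul]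
  rw [mul_comm]
  congr 1
  simp only [mFourier, ContinuousMap.coe_mk, fourier_coe_apply, ← Complex.exp_sum]
  congr 1
  simp only [Fin.sum_univ_two, Pi.neg_apply]
  push_cast
  ring

lemma kp_sob (s : ℝ) (f : (Fin 2 → ℝ) → ℂ) (F : C(KPT, ℂ))
    (h : ∀ x : Fin 2 → ℝ, F (fun i => (x i : UnitAddCircle)) = f x) :
    sobolevNorm s f ^ 2 = kpS s F := by
  unfold sobolevNorm kpS
  simp only [kp_coef f F h]
  rw [← ENNReal.rpow_natCast, ← ENNReal.rpow_mul]
  norm_num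

lemma kp_sup (f : (Fin 2 → ℝ) → ℂ) (F : C(KPT, ℂ))
    (h : ∀ x : Fin 2 → ℝ, F (fun i => (x i : UnitAddCircle)) = f x) (t : KPT) :
    ‖F t‖ ≤ ⨆ x, ‖f x‖ := by
  have hr : ∀ i, ∃ y : ℝ, (y : UnitAddCircle) = t i := fun i => QuotientAddGroup.mk_surjective _
  choose y hy using hr
  have ht : t = fun i => (y i : UnitAddCircle) := by funext i; exact (hy i).symm
  rw [ht, h]
  refine le_ciSup (f := fun x => ‖f x‖) ⟨‖F‖, ?_⟩ y
  rintro _ ⟨x, rfl⟩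
  dsimp only
  rw [← h]
  exact F.norm_coe_le_norm _

end Aux

/-- Lemma 2.2 (Kato–Ponce type product estimate on `T²`): for `s ≥ 0` there is `C > 0`
with `‖fg‖_{H^s} ≤ C(‖f‖_{L^∞}‖g‖_{H^s} + ‖g‖_{L^∞}‖f‖_{H^s})` for all smooth
`ℤ²`-periodic `f, g`. -/
theorem stmt_5 (s : ℝ) (hs : 0 ≤ s) :
    ∃ C > (0 : ℝ), ∀ f g : (Fin 2 → ℝ) → ℂ,
      ContDiff ℝ (⊤ : ℕ∞) f →
      (∀ (x : Fin 2 → ℝ) (m : Fin 2 → ℤ), f (x + fun i => (m i : ℝ)) = f x) →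
      ContDiff ℝ (⊤ : ℕ∞) g →
      (∀ (x : Fin 2 → ℝ) (m : Fin 2 → ℤ), g (x + fun i => (m i : ℝ)) = g x) →
      sobolevNorm s (fun x => f x * g x) ≤
        ENNReal.ofReal C *
          (ENNReal.ofReal (⨆ x : Fin 2 → ℝ, ‖f x‖) * sobolevNorm s g +
           ENNReal.ofReal (⨆ x : Fin 2 → ℝ, ‖g x‖) * sobolevNorm s f) := by
  refine ⟨Real.sqrt (56 ^ s * 18), by positivity, ?_⟩
  intro f g hf hfp hg hgp
  obtain ⟨F, hF⟩ := kp_lift f hf.continuous hfp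
  obtain ⟨G, hG⟩ := kp_lift g hg.continuous hgp
  have hFG : ∀ x : Fin 2 → ℝ, (F * G) (fun i => (x i : UnitAddCircle)) = f x * g x := by
    intro x
    rw [ContinuousMap.mul_apply, hF, hG]
  rw [← ENNReal.pow_le_pow_left_iff (two_ne_zero)]
  rw [kp_sob s _ _ hFG]
  refine (kpS_mul hs F G _ _ (kp_sup f F hF) (kp_sup g G hG)).trans ?_
  rw [← kp_sob s f F hF, ← kp_sob s g G hG, mul_pow, ← ENNReal.ofReal_pow (Real.sqrt_nonneg _),
    Real.sq_sqrt (by positivity), ENNReal.ofReal_mul (by positivity), ENNReal.ofReal_ofNat,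
    mul_assoc]
  gcongr
  rw [← mul_pow, ← mul_pow, add_comm]
  generalize ENNReal.ofReal (⨆ x, ‖f x‖) * sobolevNorm s g = a
  generalize ENNReal.ofReal (⨆ x, ‖g x‖) * sobolevNorm s f = b
  calc a ^ 2 + b ^ 2 ≤ a ^ 2 + b ^ 2 + 2 * a * b := le_self_add
    _ = (a + b) ^ 2 := by ring
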